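/- arXiv:2403.02596 — 2 statements merged into one kernel-verified Lean document; each statement's English description precedes it below -/
import Mathlib

section
/- Let d > 0 be an integer, c ∈ ℝ a real number, and g(z) ∈ ℚ[z] a polynomial of degree strictly less than d. Then there exists an integer M > 0 such that there is no numerical polynomial P(z) ∈ ℚ[z] satisfying all of the following: (i) deg P = d; (ii) the leading coefficient of P is positive; (iii) c < P(n) for every n = 0, 1, …, d; and (iv) P(n) ≤ g(n) for all integers 0 ≤ n ≤ M. -/
/-! If `M ≥ d`, then the values `P(0), …, P(d)` of an admissible `P` are integers confined to the
bounded intervals `(c, g(n)]`, and a polynomial of degree `d` is determined by its values at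
`d + 1` points; so there are only finitely many candidates (`finite_candidates`). Each of them has
larger degree than `g` and positive leading coefficient, so it exceeds `g` at some natural number
(`exists_eval_lt_eval`). Any
`M ≥ d` at least as large as these finitely many numbers works. -/

/-- A *numerical polynomial* is a polynomial `P ∈ ℚ[z]` with `P(n) ∈ ℤ`
for every integer `n`. -/
def IsNumericalPolynomial (P : Polynomial ℚ) : Prop :=
  ∀ n : ℤ, ∃ z : ℤ, P.eval (n : ℚ) = (z : ℚ)

lemma finite_intCast_between (c : ℝ) (b : ℚ) :
    {q : ℚ | (∃ z : ℤ, q = z) ∧ c < (q : ℝ) ∧ q ≤ b}.Finite := by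
  refine ((Set.finite_Icc ⌊c⌋ ⌊b⌋).image (fun z : ℤ => (z : ℚ))).subset ?_
  rintro q ⟨⟨z, rfl⟩, hc, hb⟩
  refine ⟨z, ⟨?_, Int.le_floor.mpr hb⟩, rfl⟩
  have h : ((⌊c⌋ : ℤ) : ℝ) < z := (Int.floor_le c).trans_lt (by simpa using hc)
  exact_mod_cast h.le

lemma finite_candidates (d : ℕ) (c : ℝ) (g : Polynomial ℚ) :
    {P : Polynomial ℚ | IsNumericalPolynomial P ∧ P.natDegree = d ∧
      (∀ n : ℕ, n ≤ d → c < ((P.eval (n : ℚ) : ℚ) : ℝ)) ∧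
      (∀ n : ℕ, n ≤ d → P.eval (n : ℚ) ≤ g.eval (n : ℚ))}.Finite := by
  refine Set.Finite.of_finite_image
    (f := fun (P : Polynomial ℚ) (i : Fin (d + 1)) => P.eval ((i : ℕ) : ℚ)) ?_ ?_
  · refine (Set.Finite.pi' fun i : Fin (d + 1) =>
      finite_intCast_between c (g.eval ((i : ℕ) : ℚ))).subset ?_
    rintro _ ⟨P, ⟨hP, -, hc, hg⟩, rfl⟩ i
    have hi : (i : ℕ) ≤ d := Nat.lt_succ_iff.mp i.2
    exact ⟨by simpa using hP (i : ℕ), hc i hi, hg i hi⟩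
  · rintro P ⟨-, hP, -⟩ Q ⟨-, hQ, -⟩ h
    have hdeg : ∀ R : Polynomial ℚ, R.natDegree = d →
        R.degree < (Finset.univ : Finset (Fin (d + 1))).card := by
      intro R hR
      rw [Finset.card_univ, Fintype.card_fin]
      exact R.degree_le_natDegree.trans_lt (by rw [hR]; exact_mod_cast d.lt_succ_self)
    refine Polynomial.eq_of_degrees_lt_of_eval_index_eq (v := fun i : Fin (d + 1) => ((i : ℕ) : ℚ))
      Finset.univ ?_ (hdeg P hP) (hdeg Q hQ) fun i _ => congrFun h i
    intro i _ j _ hij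
    exact Fin.ext (Nat.cast_injective (R := ℚ) hij)

lemma exists_eval_lt_eval {P g : Polynomial ℚ} (hd : 0 < P.natDegree)
    (hg : g.degree < P.natDegree) (hlc : 0 < P.leadingCoeff) :
    ∃ n : ℕ, g.eval (n : ℚ) < P.eval (n : ℚ) := by
  have hdeg : P.degree = P.natDegree :=
    Polynomial.degree_eq_natDegree (Polynomial.leadingCoeff_ne_zero.mp hlc.ne')
  have hlt : g.degree < P.degree := hdeg ▸ hg
  have ht := (P - g).tendsto_atTop_of_leadingCoeff_nonneg
    (by rw [Polynomial.degree_sub_eq_left_of_degree_lt hlt, hdeg]; exact_mod_cast hd)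
    (by rw [Polynomial.leadingCoeff_sub_of_degree_lt hlt]; exact hlc.le)
  obtain ⟨n, hn⟩ :=
    ((ht.comp tendsto_natCast_atTop_atTop).eventually (Filter.eventually_gt_atTop 0)).exists
  exact ⟨n, by simpa using hn⟩

/-- Lemma 3.10 of Sato, arXiv:2403.02596: for an integer
`d > 0`, a real number `c` and a polynomial `g ∈ ℚ[z]` of degree `< d`, there
is an integer `M > 0` such that no numerical polynomial `P ∈ ℚ[z]` satisfies:
(i) `deg P = d`; (ii) the leading coefficient of `P` is positive;
(iii) `c < P(n)` for `n = 0, 1, …, d`; and (iv) `P(n) ≤ g(n)` for all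
integers `0 ≤ n ≤ M`. -/
theorem no_numerical_polynomial_bounded_by_lower_degree
    (d : ℕ) (hd : 0 < d) (c : ℝ) (g : Polynomial ℚ) (hg : g.degree < d) :
    ∃ M : ℕ, 0 < M ∧
      ¬ ∃ P : Polynomial ℚ,
        IsNumericalPolynomial P ∧
        P.natDegree = d ∧
        0 < P.leadingCoeff ∧
        (∀ n : ℕ, n ≤ d → c < ((P.eval (n : ℚ) : ℚ) : ℝ)) ∧
        (∀ n : ℕ, n ≤ M → P.eval (n : ℚ) ≤ g.eval (n : ℚ)) := by
  have hex : ∀ P : Polynomial ℚ, ∃ n : ℕ, P.natDegree = d → 0 < P.leadingCoeff →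
      g.eval (n : ℚ) < P.eval (n : ℚ) := by
    intro P
    by_cases h : P.natDegree = d ∧ 0 < P.leadingCoeff
    · obtain ⟨n, hn⟩ := exists_eval_lt_eval (h.1 ▸ hd) (h.1 ▸ hg) h.2
      exact ⟨n, fun _ _ => hn⟩
    · exact ⟨0, fun h₁ h₂ => absurd ⟨h₁, h₂⟩ h⟩
  choose N hN using hex
  obtain ⟨B, hB⟩ := ((finite_candidates d c g).image N).bddAbove
  refine ⟨max d B, lt_max_of_lt_left hd, ?_⟩
  rintro ⟨P, hP, hPd, hlc, hc, hle⟩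
  have hNB : N P ≤ B := hB ⟨P,
    ⟨hP, hPd, hc, fun n hn => hle n (hn.trans (le_max_left _ _))⟩, rfl⟩
  exact (hN P hPd hlc).not_ge (hle _ (hNB.trans (le_max_right _ _)))
end

section
/- Let g: Z → Y be a proper surjective morphism between varieties over an algebraically closed field k. Assume there exists an open dense subset U ⊆ Z such that the restriction of g to the closed points of U is injective, and such that for every closed point z ∈ U the composite O_{Y, g(z)} → O_{Z,z} → O_{Z,z}/𝔪_z^2 is surjective. Then g is birational. -/
/-!
**Statement 18** (Lemma 4.5 of Sato, "Boundedness of weak Fano threefolds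
with fixed Gorenstein index", arXiv:2403.02596).
-/

universe u

open AlgebraicGeometry CategoryTheory

/-- A morphism `g : Z ⟶ Y` of varieties is *birational* if it induces an
isomorphism between dense open subsets: there is a dense open `V ⊆ Y` whose
(dense) preimage is mapped isomorphically onto `V` by `g`. -/
def AlgebraicGeometry.Scheme.Hom.IsBirationalMor {Z Y : Scheme.{u}} (g : Z.Hom Y) : Prop :=
  ∃ V : Y.Opens, Dense (V : Set Y) ∧ Dense ((g ⁻¹ᵁ V : Z.Opens) : Set Z) ∧
    IsIso (g ∣_ V)

/-!
Since `Z` and `Y` are Jacobson, injectivity of `g` on the closed points of `U` forces the fibre of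
`g|_U` over the image of a closed point to be a single point. The quasi-finite locus is open, and
a nonempty closed subset contains a closed point, so `g|_U` is locally quasi-finite
(`locallyQuasiFinite_of_injOn_closedPoints`).

In particular `g` is quasi-finite at the generic point `η_Z` of `Z`, so `η_Z` is a closed point of
the generic fibre. As `η_Z` specializes to every point of that fibre, the generic fibre is `{η_Z}`
(`fiber_genericPoint_eq_singleton`). Hence `η_Y` does not lie in the closed set `g(Z \ U)`, and
there is an affine open neighbourhood `V` of `η_Y` with `g⁻¹(V) ⊆ U`. Over `V` the morphism is
proper and quasi-finite, hence finite by Zariski's main theorem.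

Let `A = Γ(Y, V)` and `B = Γ(Z, g⁻¹(V))`, a finite `A`-algebra. Let `m` be a maximal ideal of `A`
with `m B ≠ B`. Injectivity gives a unique maximal ideal `n` of `B` above `m`, and the jet
hypothesis says `B = im A + m B + n²` (`jet_approx_of_localization`). An element of `n` then lies
in `m B + n²`, so Nakayama gives `n = m B`, and therefore `B = im A + m B`. Nakayama applied to
the finite `A`-module `B / im A` shows that `A → B` is surjective
(`surjective_of_finite_of_jet_approx`). So `g` is, over `V`, a surjective closed immersion into an
integral scheme, that is, an isomorphism.
-/

/-- The jet condition, descended from local rings to global sections. Here `A'` and `B'` are the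
local rings of `A` and `B` at maximal ideals `m` and `n`. If `A' → B' / n² B'` is surjective, then
every element of `B` is congruent to an element of `A` modulo `m B + n²`. The summand `m B` absorbs
the replacement of a fraction in `A'` by an element of `A`. -/
theorem jet_approx_of_localization {A B A' B' : Type*} [CommRing A] [CommRing B] [CommRing A']
    [CommRing B'] [Algebra A B] [Algebra A A'] [Algebra B B'] (m : Ideal A) [m.IsMaximal]
    (n : Ideal B) [n.IsMaximal]
    [IsLocalization.AtPrime A' m] [IsLocalization.AtPrime B' n] [IsLocalRing B']
    (ψ : A' →+* B') (hψ : ∀ a, ψ (algebraMap A A' a) = algebraMap B B' (algebraMap A B a))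
    (hsurj : Function.Surjective
      (fun a : A' => Ideal.Quotient.mk (IsLocalRing.maximalIdeal B' ^ 2) (ψ a)))
    (b : B) : ∃ a : A, b - algebraMap A B a ∈ m.map (algebraMap A B) ⊔ n ^ 2 := by
  obtain ⟨a', ha'⟩ := hsurj (Ideal.Quotient.mk _ (algebraMap B B' b))
  replace ha' : ψ a' - algebraMap B B' b ∈ IsLocalRing.maximalIdeal B' ^ 2 :=
    Ideal.Quotient.eq.mp ha'
  rw [← IsLocalization.AtPrime.map_eq_maximalIdeal n B', ← Ideal.map_pow] at ha'
  obtain ⟨x, s, rfl⟩ := IsLocalization.exists_mk'_eq m.primeCompl a'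
  obtain ⟨t, i, hi, hti⟩ := Ideal.IsMaximal.exists_inv (I := m) inferInstance s.2
  refine ⟨t * x, ?_⟩
  set I := m.map (algebraMap A B) ⊔ n ^ 2 with hI
  -- `mk' x s` and `t * x` differ by an element of `m A'` because `t * s ≡ 1` modulo `m`.
  have h1 : IsLocalization.mk' A' x s - algebraMap A A' (t * x) ∈ m.map (algebraMap A A') := by
    have : IsLocalization.mk' A' x s - algebraMap A A' (t * x)
        = IsLocalization.mk' A' x s * algebraMap A A' i := by
      have h2 : algebraMap A A' i = 1 - algebraMap A A' t * algebraMap A A' s := by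
        rw [← map_mul, ← map_one (algebraMap A A'), ← hti]; simp
      have h3 := IsLocalization.mk'_spec A' x s
      rw [h2, map_mul, ← h3]; ring
    rw [this]
    exact Ideal.mul_mem_left _ _ (Ideal.mem_map_of_mem _ hi)
  have h2 : ψ (IsLocalization.mk' A' x s) - algebraMap B B' (algebraMap A B (t * x))
      ∈ I.map (algebraMap B B') := by
    rw [← hψ, ← map_sub]
    have := Ideal.mem_map_of_mem ψ h1
    rw [Ideal.map_map] at this
    have e : ψ.comp (algebraMap A A') = (algebraMap B B').comp (algebraMap A B) :=
      RingHom.ext hψ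
    rw [e, ← Ideal.map_map] at this
    exact Ideal.map_mono le_sup_left this
  have h3 : algebraMap B B' (b - algebraMap A B (t * x)) ∈ I.map (algebraMap B B') := by
    have h4 := Ideal.map_mono (f := algebraMap B B') (le_sup_right : n ^ 2 ≤ I) ha'
    have := sub_mem h2 h4
    rw [map_sub]
    convert this using 1
    ring
  rw [IsLocalization.algebraMap_mem_map_algebraMap_iff n.primeCompl] at h3
  obtain ⟨u, hu, hux⟩ := h3
  -- `I` contains `n ^ 2`, so an element outside `n` is a unit modulo `I`.
  obtain ⟨v, j, hj, hvj⟩ := Ideal.IsMaximal.exists_inv (I := n) inferInstance hu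
  have hj2 : j ^ 2 ∈ I := le_sup_right (a := m.map (algebraMap A B)) (Ideal.pow_mem_pow hj 2)
  set y := b - algebraMap A B (t * x)
  have : y = (v * (1 + j)) * (u * y) + y * j ^ 2 := by
    have : v * u = 1 - j := by rw [← hvj]; ring
    linear_combination (-(1 + j) * y) * this
  rw [this]
  exact add_mem (Ideal.mul_mem_left _ _ hux) (Ideal.mul_mem_left _ _ hj2)

/-- A finite ring map `A → B` is surjective as soon as distinct maximal ideals of `B` lie over
distinct ideals of `A` and `B = A + m B + n²` for each maximal ideal `n` of `B`, where `m` is the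
contraction of `n`. Both steps are instances of Nakayama's lemma. -/
theorem surjective_of_finite_of_jet_approx {A B : Type*} [CommRing A] [CommRing B] [Algebra A B]
    [Module.Finite A B] [IsNoetherianRing B]
    (huniq : ∀ n₁ n₂ : Ideal B, n₁.IsMaximal → n₂.IsMaximal →
      n₁.comap (algebraMap A B) = n₂.comap (algebraMap A B) → n₁ = n₂)
    (hjet : ∀ n : Ideal B, n.IsMaximal → ∀ b : B, ∃ a : A,
      b - algebraMap A B a ∈ (n.comap (algebraMap A B)).map (algebraMap A B) ⊔ n ^ 2) :
    Function.Surjective (algebraMap A B) := by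
  -- Modulo each maximal ideal `m` of `A`, every element of `B` comes from `A`.
  have key : ∀ m : Ideal A, m.IsMaximal → ∀ b : B, ∃ a : A,
      b - algebraMap A B a ∈ m.map (algebraMap A B) := by
    intro m hm b
    by_cases htop : m.map (algebraMap A B) = ⊤
    · exact ⟨0, by simp [htop]⟩
    obtain ⟨n, hn, hle⟩ := Ideal.exists_le_maximal _ htop
    have hmax : ∀ n' : Ideal B, n'.IsMaximal → m.map (algebraMap A B) ≤ n' →
        n'.comap (algebraMap A B) = m := fun n' hn' h =>
      (hm.eq_of_le (Ideal.comap_ne_top _ hn'.ne_top) (Ideal.map_le_iff_le_comap.mp h)).symm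
    have hnm := hmax n hn hle
    have hjet' := hjet n hn
    rw [hnm] at hjet'
    have hn2 : n ≤ m.map (algebraMap A B) ⊔ n • n := by
      intro x hx
      obtain ⟨a, ha⟩ := hjet' x
      have h1 : algebraMap A B a ∈ n := by
        have : x - algebraMap A B a ∈ n := (sup_le hle (Ideal.pow_le_self two_ne_zero)) ha
        simpa using sub_mem hx this
      have h2 : algebraMap A B a ∈ m.map (algebraMap A B) :=
        Ideal.mem_map_of_mem _ (hnm ▸ h1)
      have := add_mem ha (show _ ∈ _ ⊔ n ^ 2 from Ideal.mem_sup_left h2)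
      rwa [sub_add_cancel, sq] at this
    obtain ⟨r, hr1, hr⟩ := Submodule.exists_sub_one_mem_and_smul_le_of_fg_of_le_sup
      (IsNoetherian.noetherian n) le_rfl hn2
    -- `r` lies outside `n`, the only maximal ideal containing `m B`.
    have hr2 : m.map (algebraMap A B) ⊔ Ideal.span {r} = ⊤ := by
      by_contra hne
      obtain ⟨n', hn', hle'⟩ := Ideal.exists_le_maximal _ hne
      have := huniq n' n hn' hn ((hmax n' hn' (le_sup_left.trans hle')).trans hnm.symm)
      subst this
      have hrn : r ∈ n' := hle' (Ideal.mem_sup_right (Ideal.mem_span_singleton_self r))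
      refine hn'.ne_top ((Ideal.eq_top_iff_one _).mpr ?_)
      simpa using sub_mem hrn hr1
    have hnle : n ≤ m.map (algebraMap A B) := by
      intro x hx
      obtain ⟨y, hy, z, hz, hyz⟩ := Submodule.mem_sup.mp ((Ideal.eq_top_iff_one _).mp hr2)
      obtain ⟨w, rfl⟩ := Ideal.mem_span_singleton.mp hz
      have hrx : r * x ∈ m.map (algebraMap A B) :=
        hr (Submodule.smul_mem_pointwise_smul x r n hx)
      have : x = x * y + w * (r * x) := by linear_combination (-x) * hyz
      rw [this]
      exact add_mem (Ideal.mul_mem_left _ _ hy) (Ideal.mul_mem_left _ _ hrx)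
    obtain ⟨a, ha⟩ := hjet' b
    exact ⟨a, (sup_le le_rfl ((Ideal.pow_le_self two_ne_zero).trans hnle)) ha⟩
  -- The cokernel `B / A` is a finite `A`-module equal to `m` times itself for all maximal `m`.
  let R : Submodule A B := LinearMap.range (Algebra.linearMap A B)
  have hann : (⊤ : Submodule A (B ⧸ R)).annihilator = ⊤ := by
    by_contra hne
    obtain ⟨m, hm, hle⟩ := Ideal.exists_le_maximal _ hne
    obtain ⟨r, hr1, hr⟩ := Submodule.exists_sub_one_mem_and_smul_eq_zero_of_fg_of_le_smul m
      (⊤ : Submodule A (B ⧸ R)) Module.Finite.fg_top (by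
        rintro x -
        obtain ⟨b, rfl⟩ := Submodule.mkQ_surjective R x
        obtain ⟨a, ha⟩ := key m hm b
        have e : R.mkQ b = R.mkQ (b - algebraMap A B a) := by
          rw [map_sub, eq_comm, sub_eq_self]
          exact (Submodule.Quotient.mk_eq_zero R).mpr ⟨a, rfl⟩
        rw [e]
        have h1 : b - algebraMap A B a ∈ m • (⊤ : Submodule A B) := by
          rw [Ideal.smul_top_eq_map]; exact ha
        have := Submodule.mem_map_of_mem (f := R.mkQ) h1
        rw [Submodule.map_smul''] at this
        exact Submodule.smul_mono le_rfl le_top this)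
    have hrm : r ∈ m := hle (Submodule.mem_annihilator.mpr hr)
    exact hm.ne_top ((Ideal.eq_top_iff_one _).mpr (by simpa using sub_mem hrm hr1))
  intro b
  have h1 : (1 : A) ∈ (⊤ : Submodule A (B ⧸ R)).annihilator := hann ▸ Submodule.mem_top
  have h2 := Submodule.mem_annihilator.mp h1 (R.mkQ b) trivial
  rw [one_smul] at h2
  exact (Submodule.Quotient.mk_eq_zero R).mp h2

/-- The fibre over `h z` is closed in the Jacobson space `Z`, hence the closure of its closed
points, and `z` is the only one. -/
theorem fiber_eq_singleton_of_injOn_closedPoints {Z Y : Scheme.{u}} [JacobsonSpace Z]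
    [JacobsonSpace Y]
    (h : Z ⟶ Y) [LocallyOfFiniteType h] (hinj : Set.InjOn h (closedPoints Z)) {z : Z}
    (hz : IsClosed {z}) : h ⁻¹' {h z} = {z} := by
  have hy : IsClosed {h z} := h.closePoints_subset_preimage_closedPoints hz
  have h1 := JacobsonSpace.closure_inter_closedPoints (hy.preimage h.continuous)
  suffices h ⁻¹' {h z} ∩ closedPoints Z = {z} by rw [← h1, this, hz.closure_eq]
  ext w
  exact ⟨fun hw => hinj hw.2 hz hw.1, fun hw => by obtain rfl : w = z := hw; exact ⟨rfl, hz⟩⟩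

/-- Quasi-finiteness is an open condition, so on a Jacobson scheme it suffices to check it at
closed points, where the fibre is a singleton. -/
theorem locallyQuasiFinite_of_injOn_closedPoints {Z Y : Scheme.{u}} [JacobsonSpace Z]
    [JacobsonSpace Y]
    (h : Z ⟶ Y) [LocallyOfFiniteType h] (hinj : Set.InjOn h (closedPoints Z)) :
    LocallyQuasiFinite h := by
  rw [← Scheme.Hom.quasiFiniteLocus_eq_top_iff]
  by_contra hne
  have hne' : ((h.quasiFiniteLocus : Set Z)ᶜ).Nonempty := by
    rw [Set.nonempty_compl]
    exact fun e => hne (TopologicalSpace.Opens.ext e)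
  obtain ⟨z, hz1, hz2⟩ := nonempty_inter_closedPoints hne'
    h.quasiFiniteLocus.isOpen.isClosed_compl.isLocallyClosed
  refine hz1 (Scheme.Hom.quasiFiniteAt_iff_isOpen_singleton_asFiber.mpr ?_)
  have hs : (h ⁻¹' {h z}).Subsingleton := by
    rw [fiber_eq_singleton_of_injOn_closedPoints h hinj hz2]; exact Set.subsingleton_singleton
  have := hs.coe_sort
  have : Subsingleton (h.fiber (h z)) := (h.fiberHomeo (h z)).injective.subsingleton
  rw [Set.eq_univ_of_forall (s := {h.asFiber z}) fun x => Subsingleton.elim _ _]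
  exact isOpen_univ

/-- If `g` is quasi-finite at the generic point of `Z`, then that point is closed in its fibre; it
also specializes to every other point of the fibre, so there is none. -/
theorem fiber_genericPoint_eq_singleton {Z Y : Scheme.{u}} [IsIntegral Z] [IsIntegral Y]
    (g : Z ⟶ Y) [LocallyOfFiniteType g]
    (hη : g (genericPoint Z) = genericPoint Y) (hq : g.QuasiFiniteAt (genericPoint Z)) :
    g ⁻¹' {genericPoint Y} = {genericPoint Z} := by
  refine Set.Subset.antisymm (fun z hz => ?_) (by rintro _ rfl; exact hη)
  rw [← hη] at hz
  have h1 := hq.isClopen_singleton_asFiber.isClosed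
  rw [← (g.fiberHomeo (g (genericPoint Z))).isClosed_image, Set.image_singleton] at h1
  obtain ⟨C, hC, hCe⟩ := isClosed_induced_iff.mp h1
  have h2 : genericPoint Z ∈ C := by
    have : (g.fiberHomeo (g (genericPoint Z))) (g.asFiber (genericPoint Z)) ∈
      Subtype.val ⁻¹' C := by rw [hCe]; rfl
    simpa using this
  have h3 : z ∈ C := (genericPoint_specializes z).mem_closed hC h2
  have h4 : (⟨z, hz⟩ : g ⁻¹' {g (genericPoint Z)}) ∈ Subtype.val ⁻¹' C := h3
  rw [hCe] at h4
  have := congrArg Subtype.val h4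
  simpa using this

/-- Over an affine open `V` above which `g` is finite and whose preimage lies in `U`, the two
hypotheses on closed points of `U` make `Γ(Y, V) → Γ(Z, g⁻¹(V))` surjective: maximal ideals of
`Γ(Z, g⁻¹(V))` correspond to points of `g⁻¹(V)` that are closed in `Z`, because `Z` is Jacobson. -/
theorem app_surjective_of_jets {Z Y : Scheme.{u}} [JacobsonSpace Z] [IsLocallyNoetherian Y]
    (g : Z ⟶ Y) (U : Z.Opens)
    (hinj : Set.InjOn g {z : Z | z ∈ U ∧ IsClosed ({z} : Set Z)})
    (hjets : ∀ z : Z, z ∈ U → IsClosed ({z} : Set Z) →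
      Function.Surjective (fun a : Y.presheaf.stalk (g.base z) =>
        Ideal.Quotient.mk
          ((IsLocalRing.maximalIdeal (Z.presheaf.stalk z)) ^ 2)
          (g.stalkMap z a)))
    (V : Y.Opens) (hV : IsAffineOpen V) (hW : IsAffineOpen (g ⁻¹ᵁ V)) (hVU : g ⁻¹ᵁ V ≤ U)
    [IsFinite (g ∣_ V)] : Function.Surjective (g.app V) := by
  have hfin : (g.app V).hom.Finite := by
    have : IsAffine V := hV
    have h1 : (g ∣_ V).appTop.hom.Finite := (g ∣_ V).finite_app ⊤ (isAffineOpen_top _)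
    rw [morphismRestrict_appTop] at h1
    have h2 : (g.app (V.ι ''ᵁ ⊤)).hom.Finite :=
      (RingHom.finite_respectsIso.cancel_right_isIso _ _).mp h1
    rwa [Scheme.Opens.ι_image_top] at h2
  have hnoeth : IsNoetherianRing Γ(Y, V) := IsLocallyNoetherian.component_noetherian ⟨V, hV⟩
  algebraize [(g.app V).hom]
  have : IsNoetherianRing Γ(Z, g ⁻¹ᵁ V) := IsNoetherianRing.of_finite Γ(Y, V) _
  -- Each maximal ideal of `Γ(Z, g⁻¹(V))` is the ideal of a point that is closed in all of `Z`.
  have hpt : ∀ n : Ideal Γ(Z, g ⁻¹ᵁ V), n.IsMaximal → ∃ z, ∃ hz : z ∈ g ⁻¹ᵁ V,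
      IsClosed {z} ∧ (hW.primeIdealOf ⟨z, hz⟩).asIdeal = n := by
    intro n hn
    let p : Spec Γ(Z, g ⁻¹ᵁ V) := ⟨n, hn.isPrime⟩
    have hp : hW.fromSpec p ∈ g ⁻¹ᵁ V := by
      rw [← SetLike.mem_coe, ← hW.range_fromSpec]; exact ⟨p, rfl⟩
    refine ⟨hW.fromSpec p, hp, ?_, ?_⟩
    · have hc : p ∈ hW.fromSpec ⁻¹' closedPoints Z := by
        rw [hW.fromSpec.isOpenEmbedding.preimage_closedPoints]
        exact p.isClosed_singleton_iff_isMaximal.mpr hn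
      exact hc
    · have : hW.primeIdealOf ⟨hW.fromSpec p, hp⟩ = p :=
        hW.fromSpec.isOpenEmbedding.injective (hW.fromSpec_primeIdealOf _)
      rw [this]
  have hcomap (z : Z) (hz : z ∈ g ⁻¹ᵁ V) :
      (hW.primeIdealOf ⟨z, hz⟩).asIdeal.comap (algebraMap Γ(Y, V) Γ(Z, g ⁻¹ᵁ V)) =
        (hV.primeIdealOf ⟨g z, hz⟩).asIdeal := by
    have := IsAffineOpen.comap_primeIdealOf_appLE V hV (g ⁻¹ᵁ V) hW le_rfl hz
    rw [← Scheme.Hom.app_eq_appLE] at this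
    exact congrArg PrimeSpectrum.asIdeal this
  refine surjective_of_finite_of_jet_approx (A := Γ(Y, V)) (B := Γ(Z, g ⁻¹ᵁ V)) ?_ ?_
  · intro n₁ n₂ hn₁ hn₂ h
    obtain ⟨z₁, hz₁, hc₁, rfl⟩ := hpt n₁ hn₁
    obtain ⟨z₂, hz₂, hc₂, rfl⟩ := hpt n₂ hn₂
    rw [hcomap, hcomap] at h
    have h2 : g z₁ = g z₂ := by
      have := congrArg hV.fromSpec (PrimeSpectrum.ext h)
      simpa [IsAffineOpen.fromSpec_primeIdealOf] using this
    obtain rfl := hinj ⟨hVU hz₁, hc₁⟩ ⟨hVU hz₂, hc₂⟩ h2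
    rfl
  · intro n hn b
    obtain ⟨z, hz, hc, rfl⟩ := hpt n hn
    let := Y.presheaf.algebra_section_stalk ⟨g z, hz⟩
    let := Z.presheaf.algebra_section_stalk ⟨z, hz⟩
    have i1 := hV.isLocalization_stalk ⟨g z, hz⟩
    have i2 := hW.isLocalization_stalk ⟨z, hz⟩
    rw [hcomap]
    have hm : (hV.primeIdealOf ⟨g z, hz⟩).asIdeal.IsMaximal := by
      rw [← hcomap]
      exact Ideal.isMaximal_comap_of_isIntegral_of_isMaximal _
    refine jet_approx_of_localization (A' := Y.presheaf.stalk (g z))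
      (B' := Z.presheaf.stalk z) _ _ (g.stalkMap z).hom ?_ (hjets z (hVU hz) hc) b
    intro a
    exact Scheme.Hom.germ_stalkMap_apply g V z hz a

/-- let `g : Z ⟶ Y` be a proper surjective morphism between
varieties (integral schemes of finite type) over an algebraically closed field
`k`.  If there is a dense open subset `U ⊆ Z` such that `g` is injective on
the closed points of `U` and such that for every closed point `z ∈ U` the
composite `O_{Y, g(z)} → O_{Z, z} → O_{Z, z}/𝔪_z²` is surjective, then `g` is
birational. -/
theorem birational_of_injective_and_jet_surjective
    {k : Type u} [Field k] [IsAlgClosed k]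
    (Z Y : Scheme.{u}) [IsIntegral Z] [IsIntegral Y]
    (πZ : Z ⟶ Spec (CommRingCat.of k)) (πY : Y ⟶ Spec (CommRingCat.of k))
    [LocallyOfFiniteType πZ] [LocallyOfFiniteType πY]
    (g : Z ⟶ Y) (hover : g ≫ πY = πZ)
    [IsProper g] [Surjective g]
    (U : Z.Opens) (hUdense : Dense (U : Set Z))
    (hinj : Set.InjOn g.base {z : Z | z ∈ U ∧ IsClosed ({z} : Set Z)})
    (hjets : ∀ z : Z, z ∈ U → IsClosed ({z} : Set Z) →
      Function.Surjective (fun a : Y.presheaf.stalk (g.base z) =>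
        Ideal.Quotient.mk
          ((IsLocalRing.maximalIdeal (Z.presheaf.stalk z)) ^ 2)
          (g.stalkMap z a))) :
    g.IsBirationalMor := by
  have : JacobsonSpace Z := LocallyOfFiniteType.jacobsonSpace πZ
  have : JacobsonSpace Y := LocallyOfFiniteType.jacobsonSpace πY
  have : IsLocallyNoetherian Y := LocallyOfFiniteType.isLocallyNoetherian πY
  have : JacobsonSpace U := .of_isOpenEmbedding U.ι.isOpenEmbedding
  have hηU : genericPoint Z ∈ U :=
    ((genericPoint_spec Z).mem_open_set_iff U.isOpen).mpr (by simpa using hUdense.nonempty)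
  have hη : g (genericPoint Z) = genericPoint Y := by
    refine ((genericPoint_spec Z).image g.continuous).eq ?_
    rw [Set.image_univ, g.surjective.range_eq, closure_univ]
    exact genericPoint_spec Y
  have hlqf : LocallyQuasiFinite (U.ι ≫ g) := by
    refine locallyQuasiFinite_of_injOn_closedPoints _ fun a ha b hb hab => ?_
    rw [← U.ι.isOpenEmbedding.preimage_closedPoints] at ha hb
    exact U.ι.isOpenEmbedding.injective
      (hinj ⟨a.2, ha⟩ ⟨b.2, hb⟩ hab)
  have hq : g.QuasiFiniteAt (genericPoint Z) := by
    have := (U.ι ≫ g).quasiFiniteAt ⟨genericPoint Z, hηU⟩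
    have h2 := (Scheme.Hom.quasiFiniteAt_comp_iff_of_isOpenImmersion (f := U.ι) (g := g)
      (x := ⟨genericPoint Z, hηU⟩)).mp this
    rwa [Scheme.Opens.ι_apply] at h2
  have hfib := fiber_genericPoint_eq_singleton g hη hq
  -- `V₀` is the largest open subset of `Y` whose preimage is contained in `U`.
  let V₀ : Y.Opens :=
    ⟨(g '' (U : Set Z)ᶜ)ᶜ, (g.isClosedMap _ U.isOpen.isClosed_compl).isOpen_compl⟩
  have hηV₀ : genericPoint Y ∈ V₀ := by
    rintro ⟨z, hz, hgz⟩
    have : z ∈ g ⁻¹' {genericPoint Y} := hgz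
    rw [hfib] at this
    exact hz (this ▸ hηU)
  obtain ⟨_, ⟨V', hV', rfl⟩, hηV', hVV₀'⟩ := Y.isBasis_affineOpens.exists_subset_of_mem_open
    hηV₀ V₀.isOpen
  obtain ⟨V, hV, hηV, hVV₀⟩ : ∃ V : Y.Opens, IsAffineOpen V ∧ genericPoint Y ∈ V ∧ V ≤ V₀ :=
    ⟨V', hV', hηV', hVV₀'⟩
  have hVU : g ⁻¹ᵁ V ≤ U := fun z hz => by
    by_contra hzU
    exact hVV₀ hz ⟨z, hzU, rfl⟩
  have : LocallyQuasiFinite (g ∣_ V) := by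
    have : LocallyQuasiFinite (g ∣_ V ≫ V.ι) := by
      rw [morphismRestrict_ι, ← Z.homOfLE_ι hVU, Category.assoc]
      infer_instance
    exact .of_comp _ V.ι
  -- Zariski's main theorem: a proper and locally quasi-finite morphism is finite.
  have : IsFinite (g ∣_ V) := .of_isProper_of_locallyQuasiFinite _
  have : IsAffine V := hV
  have hW : IsAffineOpen (g ⁻¹ᵁ V) := isAffine_of_isAffineHom (g ∣_ V)
  have hsurj := app_surjective_of_jets g U hinj hjets V hV hW hVU
  have hηW : genericPoint Z ∈ g ⁻¹ᵁ V := by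
    change g (genericPoint Z) ∈ V
    rwa [hη]
  refine ⟨V, V.isOpen.dense ⟨_, hηV⟩, (g ⁻¹ᵁ V).isOpen.dense ⟨genericPoint Z, hηW⟩, ?_⟩
  have : IsClosedImmersion (g ∣_ V) := by
    have : IsAffine (g ⁻¹ᵁ V) := hW
    refine .of_surjective_of_isAffine _ ?_
    change Function.Surjective (g ∣_ V).appTop.hom
    rw [morphismRestrict_appTop]
    refine (RingHom.surjective_respectsIso.cancel_right_isIso _ _).mpr ?_
    change Function.Surjective (g.app (V.ι ''ᵁ ⊤)).hom
    rwa [Scheme.Opens.ι_image_top]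
  have : Surjective (g ∣_ V) := IsZariskiLocalAtTarget.restrict ‹_› V
  exact isIso_of_isClosedImmersion_of_surjective _
end
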